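/- Let C be a triangulated category and let D be a negative additive full subcategory of C, i.e., Hom(X, Y[i]) = 0 for all objects X, Y of D and all integers i > 0. Let T = ⟨D⟩ be the smallest full Karoubi-closed triangulated subcategory of C containing D. Then there exists a unique weight structure w_T on T such that all objects of D lie in T_{w_T=0}; this weight structure is bounded, and its heart equals the Karoubi-closure of D in C. Moreover, if in addition there exists a weight structure w on C with all objects of D lying in C_{w=0}, then the embedding T → C is strictly weight-exact: T_{w_T≤0} = Obj T ∩ C_{w≤0} and T_{w_T≥0} = Obj T ∩ C_{w≥0}. -/

import Mathlib

/-!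
For `D` negative put `Ge D n = (D[<n])^⊥` and `Le D n = ^⊥(D[>n])`. The weight structure on `⟨D⟩` is
given by the classes `⟨D⟩ ∩ Le D 0` and `⟨D⟩ ∩ Ge D 0`. The octahedral axiom is not available
in a pretriangulated category, so every step uses only the exactness of `Hom` on
distinguished triangles and the completion of commutative squares to morphisms of triangles.

*Orthogonality.* By induction on `M ∈ ⟨D⟩`, a morphism from (a shift of) `M` to an object `X` of
`Ge D n` becomes zero after attaching finitely many cells `Z[i]`, `Z ∈ D`, `i ≥ n`, to `X`
(`TriangClosure.kill`). An object of `Le D (n - 1)` has no morphisms to such cells, so a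
morphism from it that vanishes after the attachments was already zero (`Cell.eq_zero`). Hence
`Hom(Le D n, Ge D (n + 1)) = 0` as soon as the source lies in `⟨D⟩`, and dually as soon as the
target does.

*Heart.* Let `X ∈ ⟨D⟩` lie in `Le D 0` and in `Ge D 0`. The identity of `X` dies after
attaching cells of nonnegative dimension. Undoing the attachments one at a time keeps
the composite factored through an object of `D`, enlarged by a direct summand for each cell of
dimension `0` (`Cell.factors`). So the identity of `X` factors through `D`, and `X` is a retract of
an object of `D`.

*Decompositions.* Decompositions of `X` at level `n - 1` and of `Y` at level `n` induce one at level
`n` for the cone of `X ⟶ Y`; the orthogonality of the new third term is a four lemma argument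
(`homZero_cone`, `Dec.cone`). For retracts, let `N = M ⊕ M'` have decompositions at all levels. At very
negative levels those of `M` and `M'` are trivial, and since `M` is the cone of `M' ⟶ N` and
`M'` the cone of `M ⟶ N`, they propagate upwards (`Dec.retract`).

*Uniqueness and restriction.* In any weight structure on a subcategory containing `⟨D⟩` with `D` in
its heart, the two classes are contained in `Le D 0` and `Ge D 0`. Conversely, for an object of
`⟨D⟩` in `Le D 0` or `Ge D 0`, orthogonality splits its weight decomposition
(`IsWeightStructureOn.inter_eq`).
-/

open CategoryTheory CategoryTheory.Limits CategoryTheory.Pretriangulated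

namespace CWH

/-- `X` is a retract of `Y`. -/
def IsRetract {C : Type*} [Category C] (X Y : C) : Prop :=
  ∃ (i : X ⟶ Y) (r : Y ⟶ X), i ≫ r = 𝟙 X

/-- The Karoubi-closure of a class of objects: all retracts of its objects. -/
def retractClosure {C : Type*} [Category C] (S : Set C) : Set C :=
  {X : C | ∃ Y ∈ S, IsRetract X Y}

variable (C : Type*) [Category C] [HasZeroObject C] [HasShift C ℤ]
  [Preadditive C] [∀ n : ℤ, (shiftFunctor C n).Additive] [Pretriangulated C]

/-- A weight structure on a (pre)triangulated category (homological convention):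
a pair of retract-closed classes `LE = C_{w≤0}` and `GE = C_{w≥0}` such that
`C_{w≤0} ⊆ C_{w≤0}[1]`, `C_{w≥0}[1] ⊆ C_{w≥0}`, `Hom(C_{w≤0}, C_{w≥0}[1]) = 0`,
and every object admits a weight decomposition. -/
structure WeightStructure where
  LE : Set C
  GE : Set C
  retract_LE : ∀ ⦃X Y : C⦄, IsRetract X Y → Y ∈ LE → X ∈ LE
  retract_GE : ∀ ⦃X Y : C⦄, IsRetract X Y → Y ∈ GE → X ∈ GE
  shift_LE : ∀ ⦃X : C⦄, X ∈ LE → X⟦(-1 : ℤ)⟧ ∈ LE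
  shift_GE : ∀ ⦃X : C⦄, X ∈ GE → X⟦(1 : ℤ)⟧ ∈ GE
  orthogonal : ∀ ⦃X Y : C⦄, X ∈ LE → Y ∈ GE → ∀ f : X ⟶ Y⟦(1 : ℤ)⟧, f = 0
  decomp : ∀ M : C, ∃ (X Y : C) (f : X ⟶ M) (g : M ⟶ Y) (h : Y ⟶ X⟦(1 : ℤ)⟧),
    Triangle.mk f g h ∈ (distTriang C) ∧ X ∈ LE ∧ Y⟦(-1 : ℤ)⟧ ∈ GE

variable {C}

namespace WeightStructure

variable (w : WeightStructure C)

/-- `C_{w≤i} = C_{w≤0}[i]`. -/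
def le (i : ℤ) : Set C := {X : C | X⟦(-i)⟧ ∈ w.LE}

/-- `C_{w≥i} = C_{w≥0}[i]`. -/
def ge (i : ℤ) : Set C := {X : C | X⟦(-i)⟧ ∈ w.GE}

/-- `C_{w=i} = C_{w≤i} ∩ C_{w≥i}`. -/
def eqw (i : ℤ) : Set C := w.le i ∩ w.ge i

/-- `w` is bounded if every object lies in some `C_{w≤i}` and in some `C_{w≥i}`. -/
def IsBounded : Prop := ∀ X : C, (∃ i : ℤ, X ∈ w.le i) ∧ (∃ i : ℤ, X ∈ w.ge i)

end WeightStructure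

/-- The extension-closure of a class `S` of objects: the smallest class containing
the zero objects and `S` and closed under extensions (distinguished triangles). -/
inductive ExtClosure (S : Set C) : C → Prop
  | zero (X : C) : IsZero X → ExtClosure S X
  | of (X : C) : X ∈ S → ExtClosure S X
  | ext {A E B : C} (f : A ⟶ E) (g : E ⟶ B) (h : B ⟶ A⟦(1 : ℤ)⟧) :
      Triangle.mk f g h ∈ (distTriang C) → ExtClosure S A → ExtClosure S B → ExtClosure S E

/-- The smallest full Karoubi-closed (strict) triangulated subcategory containing `S`:
closure under zero objects, shifts, cones and retracts. -/
inductive TriangClosure (S : Set C) : C → Prop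
  | of (X : C) : X ∈ S → TriangClosure S X
  | zero (X : C) : IsZero X → TriangClosure S X
  | shift (X : C) (n : ℤ) : TriangClosure S X → TriangClosure S (X⟦n⟧)
  | ext {X Y Z : C} (f : X ⟶ Y) (g : Y ⟶ Z) (h : Z ⟶ X⟦(1 : ℤ)⟧) :
      Triangle.mk f g h ∈ (distTriang C) → TriangClosure S X → TriangClosure S Y →
      TriangClosure S Z
  | retract (X Y : C) : IsRetract X Y → TriangClosure S Y → TriangClosure S X

/-- A (strict) full triangulated subcategory, given by its class of objects:
it contains the zero objects and is closed under shifts and under the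
two-out-of-three property for distinguished triangles. -/
structure IsTriangulatedSub (P : Set C) : Prop where
  zero : ∀ X : C, IsZero X → X ∈ P
  shift : ∀ X ∈ P, ∀ n : ℤ, X⟦n⟧ ∈ P
  ext₂ : ∀ ⦃X Y Z : C⦄ (f : X ⟶ Y) (g : Y ⟶ Z) (h : Z ⟶ X⟦(1 : ℤ)⟧),
    Triangle.mk f g h ∈ (distTriang C) → X ∈ P → Z ∈ P → Y ∈ P
  ext₃ : ∀ ⦃X Y Z : C⦄ (f : X ⟶ Y) (g : Y ⟶ Z) (h : Z ⟶ X⟦(1 : ℤ)⟧),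
    Triangle.mk f g h ∈ (distTriang C) → X ∈ P → Y ∈ P → Z ∈ P
  ext₁ : ∀ ⦃X Y Z : C⦄ (f : X ⟶ Y) (g : Y ⟶ Z) (h : Z ⟶ X⟦(1 : ℤ)⟧),
    Triangle.mk f g h ∈ (distTriang C) → Y ∈ P → Z ∈ P → X ∈ P

/-- A weight structure on the full (triangulated) subcategory of `C` whose objects
are given by the class `P`; retracts are taken inside `P` and the distinguished
triangles of the subcategory are the distinguished triangles of `C` with vertices
in `P`. -/
structure IsWeightStructureOn (P LEs GEs : Set C) : Prop where
  le_sub : LEs ⊆ P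
  ge_sub : GEs ⊆ P
  retract_le : ∀ ⦃X Y : C⦄, X ∈ P → IsRetract X Y → Y ∈ LEs → X ∈ LEs
  retract_ge : ∀ ⦃X Y : C⦄, X ∈ P → IsRetract X Y → Y ∈ GEs → X ∈ GEs
  shift_le : ∀ ⦃X : C⦄, X ∈ LEs → X⟦(-1 : ℤ)⟧ ∈ LEs
  shift_ge : ∀ ⦃X : C⦄, X ∈ GEs → X⟦(1 : ℤ)⟧ ∈ GEs
  orthogonal : ∀ ⦃X Y : C⦄, X ∈ LEs → Y ∈ GEs → ∀ f : X ⟶ Y⟦(1 : ℤ)⟧, f = 0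
  decomp : ∀ M ∈ P, ∃ (X Y : C) (f : X ⟶ M) (g : M ⟶ Y) (h : Y ⟶ X⟦(1 : ℤ)⟧),
    Triangle.mk f g h ∈ (distTriang C) ∧ X ∈ LEs ∧ Y⟦(-1 : ℤ)⟧ ∈ GEs

/-- The class of morphisms of `C` whose cone lies in `P`; the Verdier quotient
`C/P` is the localization of `C` at this class. -/
def coneIn (P : Set C) : MorphismProperty C := fun X Y f =>
  ∃ (Z : C) (g : Y ⟶ Z) (h : Z ⟶ X⟦(1 : ℤ)⟧),
    Triangle.mk f g h ∈ (distTriang C) ∧ Z ∈ P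

/-- A weight Postnikov tower for `M`: choices of weight truncations `trunc l = w_{≤l}M`
(with cones `conePt l = w_{≥l+1}M`), of the connecting morphisms between them that are
compatible with `𝟙 M`, and of the distinguished triangles
`w_{≤l}M → w_{≤l+1}M → M^{-l-1}[l+1] → (w_{≤l}M)[1]`; the objects `termAt l = M^{-l}`
lie in the heart and are the terms of the associated weight complex `t(M)`, whose
boundary morphisms `bd (l+1) l : M^{-l-1} → M^{-l}` are obtained by composing the
connecting morphisms of two consecutive triangles. -/
structure WeightPostnikovTower (w : WeightStructure C) (M : C) where
  trunc : ℤ → C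
  trunc_mem : ∀ l : ℤ, trunc l ∈ w.le l
  ι : ∀ l : ℤ, trunc l ⟶ M
  conePt : ℤ → C
  cone_mem : ∀ l : ℤ, conePt l ∈ w.ge (l + 1)
  coneπ : ∀ l : ℤ, M ⟶ conePt l
  coneδ : ∀ l : ℤ, conePt l ⟶ (trunc l)⟦(1 : ℤ)⟧
  trunc_dist : ∀ l : ℤ, Triangle.mk (ι l) (coneπ l) (coneδ l) ∈ (distTriang C)
  step : ∀ l : ℤ, trunc l ⟶ trunc (l + 1)
  step_ι : ∀ l : ℤ, step l ≫ ι (l + 1) = ι l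
  termAt : ℤ → C
  term_mem : ∀ l : ℤ, termAt l ∈ w.LE ∧ termAt l ∈ w.GE
  sπ : ∀ l : ℤ, trunc l ⟶ (termAt l)⟦l⟧
  sδ : ∀ l : ℤ, (termAt (l + 1))⟦(l + 1 : ℤ)⟧ ⟶ (trunc l)⟦(1 : ℤ)⟧
  step_dist : ∀ l : ℤ, Triangle.mk (step l) (sπ (l + 1)) (sδ l) ∈ (distTriang C)
  bd : ∀ i j : ℤ, termAt i ⟶ termAt j
  bd_shape : ∀ i j : ℤ, j + 1 ≠ i → bd i j = 0
  bd_eq : ∀ l : ℤ,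
    (shiftFunctor C (l + 1)).map (bd (l + 1) l) ≫
      (shiftFunctorAdd' C l 1 (l + 1) rfl).hom.app (termAt l) =
    sδ l ≫ (shiftFunctor C (1 : ℤ)).map (sπ l)

/-- The differential of the weight complex associated to a weight Postnikov tower,
in "homological" indexing: the `l`-th term `termAt l` is the `(-l)`-th term `M^{-l}`
of the weight complex. -/
def towerD {w : WeightStructure C} {M : C} (T : WeightPostnikovTower w M) :
    ∀ l : ℤ, T.termAt (l + 1) ⟶ T.termAt l :=
  fun l => T.bd (l + 1) l

section Complexes

variable {X Y : ℤ → C}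

/-- A morphism of ("homologically indexed") complexes. -/
def IsChainMapDown (X Y : ℤ → C) (dX : ∀ l : ℤ, X (l + 1) ⟶ X l)
    (dY : ∀ l : ℤ, Y (l + 1) ⟶ Y l) (f : ∀ l : ℤ, X l ⟶ Y l) : Prop :=
  ∀ l : ℤ, f (l + 1) ≫ dY l = dX l ≫ f l

/-- Two families of morphisms of complexes are chain homotopic. -/
def ChainHomotopicDown (X Y : ℤ → C) (dX : ∀ l : ℤ, X (l + 1) ⟶ X l)
    (dY : ∀ l : ℤ, Y (l + 1) ⟶ Y l) (f g : ∀ l : ℤ, X l ⟶ Y l) : Prop :=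
  ∃ s : ∀ l : ℤ, X l ⟶ Y (l + 1),
    ∀ l : ℤ, f (l + 1) - g (l + 1) = s (l + 1) ≫ dY (l + 1) + dX l ≫ s l

/-- Two complexes are homotopy equivalent (i.e., isomorphic in the homotopy category). -/
def HomotopyEquivDown (X Y : ℤ → C) (dX : ∀ l : ℤ, X (l + 1) ⟶ X l)
    (dY : ∀ l : ℤ, Y (l + 1) ⟶ Y l) : Prop :=
  ∃ (f : ∀ l : ℤ, X l ⟶ Y l) (g : ∀ l : ℤ, Y l ⟶ X l),
    IsChainMapDown X Y dX dY f ∧ IsChainMapDown Y X dY dX g ∧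
    ChainHomotopicDown X X dX dX (fun l => f l ≫ g l) (fun l => 𝟙 (X l)) ∧
    ChainHomotopicDown Y Y dY dY (fun l => g l ≫ f l) (fun l => 𝟙 (Y l))

end Complexes


set_option linter.unusedSectionVars false

/-! ### Vanishing of Hom groups -/

/-- `Hom(A, B) = 0`. -/
def HomZero (A B : C) : Prop := ∀ f : A ⟶ B, f = 0

lemma HomZero.of_iso {A A' B B' : C} (h : HomZero A B) (e : A' ≅ A) (e' : B' ≅ B) :
    HomZero A' B' := by
  intro f
  have h1 := h (e.inv ≫ f ≫ e'.hom)
  rw [← cancel_epi e.inv, ← cancel_mono e'.hom]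
  simpa using h1

lemma HomZero.of_shift {A B : C} (k : ℤ) (h : HomZero (A⟦k⟧) (B⟦k⟧)) : HomZero A B := by
  intro f
  apply (shiftFunctor C k).map_injective
  rw [h ((shiftFunctor C k).map f), Functor.map_zero]

/-- The isomorphism `X[a][b] ≅ X[c]` for `a + b = c`. -/
noncomputable def shiftIso (X : C) (a b c : ℤ) (h : a + b = c) : (X⟦a⟧)⟦b⟧ ≅ X⟦c⟧ :=
  ((shiftFunctorAdd' C a b c h).app X).symm

/-- The isomorphism `X[a][b] ≅ X` for `a + b = 0`. -/
noncomputable def shiftIsoId (X : C) (a b : ℤ) (h : a + b = 0) : (X⟦a⟧)⟦b⟧ ≅ X :=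
  (shiftFunctorCompIsoId C a b h).app X

lemma IsRetract.of_iso {X Y : C} (e : X ≅ Y) : IsRetract X Y := ⟨e.hom, e.inv, by simp⟩

lemma IsRetract.shift {X Y : C} (h : IsRetract X Y) (k : ℤ) : IsRetract (X⟦k⟧) (Y⟦k⟧) := by
  obtain ⟨i, r, hir⟩ := h
  exact ⟨i⟦k⟧', r⟦k⟧', by rw [← Functor.map_comp, hir, CategoryTheory.Functor.map_id]⟩

lemma IsRetract.trans {X Y Z : C} (h : IsRetract X Y) (h' : IsRetract Y Z) : IsRetract X Z := by
  obtain ⟨i, r, hir⟩ := h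
  obtain ⟨i', r', hir'⟩ := h'
  exact ⟨i ≫ i', r' ≫ r, by simp [reassoc_of% hir', hir]⟩

lemma HomZero.retract_left {A A' B : C} (h : HomZero A B) (r : IsRetract A' A) :
    HomZero A' B := by
  obtain ⟨i, p, hip⟩ := r
  intro f
  rw [← Category.id_comp f, ← hip, Category.assoc, h (p ≫ f), comp_zero]

lemma HomZero.retract_right {A B B' : C} (h : HomZero A B) (r : IsRetract B' B) :
    HomZero A B' := by
  obtain ⟨i, p, hip⟩ := r
  intro f
  rw [← Category.comp_id f, ← hip, ← Category.assoc, h (f ≫ i), zero_comp]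

/-- `Y` is right orthogonal to all `X[i]` with `X ∈ D` and `i < n`. -/
def Ge (D : Set C) (n : ℤ) (Y : C) : Prop := ∀ X ∈ D, ∀ i : ℤ, i < n → HomZero (X⟦i⟧) Y

/-- `X` is left orthogonal to all `Y[i]` with `Y ∈ D` and `i > n`. -/
def Le (D : Set C) (n : ℤ) (X : C) : Prop := ∀ Y ∈ D, ∀ i : ℤ, n < i → HomZero X (Y⟦i⟧)

/-- Negativity of `D`: there are no nonzero morphisms `X ⟶ Y[i]` for `X, Y ∈ D`, `i > 0`. -/
def Negative (D : Set C) : Prop :=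
  ∀ ⦃X Y : C⦄, X ∈ D → Y ∈ D → ∀ i : ℤ, 0 < i → ∀ f : X ⟶ Y⟦i⟧, f = 0

variable {D : Set C}

lemma Negative.homZero (hD : Negative D) {X Y : C} (hX : X ∈ D) (hY : Y ∈ D) {i j : ℤ}
    (hij : i < j) : HomZero (X⟦i⟧) (Y⟦j⟧) := by
  have h : HomZero X (Y⟦j - i⟧) := hD hX hY (j - i) (by lia)
  exact (h.of_iso (shiftIsoId X i (-i) (by lia))
    (shiftIso Y j (-i) (j - i) (by lia))).of_shift (-i)

lemma Ge.mono {n m : ℤ} {Y : C} (h : Ge D n Y) (hm : m ≤ n) : Ge D m Y :=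
  fun X hX i hi => h X hX i (by lia)

lemma Le.mono {n m : ℤ} {X : C} (h : Le D n X) (hm : n ≤ m) : Le D m X :=
  fun Y hY i hi => h Y hY i (by lia)

lemma Ge.retract {n : ℤ} {Y Y' : C} (h : Ge D n Y) (r : IsRetract Y' Y) : Ge D n Y' :=
  fun X hX i hi => (h X hX i hi).retract_right r

lemma Le.retract {n : ℤ} {X X' : C} (h : Le D n X) (r : IsRetract X' X) : Le D n X' :=
  fun Y hY i hi => (h Y hY i hi).retract_left r

lemma Ge.shift {n : ℤ} {Y : C} (h : Ge D n Y) (k m : ℤ) (hm : n + k = m) : Ge D m (Y⟦k⟧) :=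
  fun X hX i hi => ((h X hX (i - k) (by lia)).of_iso (shiftIso X i (-k) _ (by lia))
    (shiftIsoId Y k (-k) (by lia))).of_shift (-k)

lemma Le.shift {n : ℤ} {X : C} (h : Le D n X) (k m : ℤ) (hm : n + k = m) : Le D m (X⟦k⟧) :=
  fun Y hY i hi => ((h Y hY (i - k) (by lia)).of_iso (shiftIsoId X k (-k) (by lia))
    (shiftIso Y i (-k) _ (by lia))).of_shift (-k)

lemma Ge.of_isZero {Y : C} (h : IsZero Y) (n : ℤ) : Ge D n Y :=
  fun _ _ _ _ f => h.eq_of_tgt f 0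

lemma Le.of_isZero {X : C} (h : IsZero X) (n : ℤ) : Le D n X :=
  fun _ _ _ _ f => h.eq_of_src f 0

lemma Negative.ge (hD : Negative D) {X : C} (hX : X ∈ D) {i n : ℤ} (h : n ≤ i) :
    Ge D n (X⟦i⟧) := fun _ hY _ hj => hD.homZero hY hX (by lia)

lemma Negative.le (hD : Negative D) {X : C} (hX : X ∈ D) {i n : ℤ} (h : i ≤ n) :
    Le D n (X⟦i⟧) := fun _ hY _ hj => hD.homZero hX hY (by lia)

lemma Negative.ge_zero (hD : Negative D) {X : C} (hX : X ∈ D) : Ge D 0 X :=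
  (hD.ge hX le_rfl).retract (IsRetract.of_iso ((shiftFunctorZero C ℤ).symm.app X))

lemma Negative.le_zero (hD : Negative D) {X : C} (hX : X ∈ D) : Le D 0 X :=
  (hD.le hX le_rfl).retract (IsRetract.of_iso ((shiftFunctorZero C ℤ).symm.app X))

lemma Ge.obj₂ {n : ℤ} {T : Triangle C} (hT : T ∈ distTriang C) (h₁ : Ge D n T.obj₁)
    (h₃ : Ge D n T.obj₃) : Ge D n T.obj₂ := by
  intro X hX i hi f
  obtain ⟨g, rfl⟩ := T.coyoneda_exact₂ hT f (h₃ X hX i hi _)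
  rw [h₁ X hX i hi g, zero_comp]

lemma Le.obj₂ {n : ℤ} {T : Triangle C} (hT : T ∈ distTriang C) (h₁ : Le D n T.obj₁)
    (h₃ : Le D n T.obj₃) : Le D n T.obj₂ := by
  intro X hX i hi f
  obtain ⟨g, rfl⟩ := T.yoneda_exact₂ hT f (h₁ X hX i hi _)
  rw [h₃ X hX i hi g, comp_zero]

lemma Ge.obj₃ {n : ℤ} {T : Triangle C} (hT : T ∈ distTriang C) (h₁ : Ge D (n - 1) T.obj₁)
    (h₂ : Ge D n T.obj₂) : Ge D n T.obj₃ :=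
  Ge.obj₂ (rot_of_distTriang T hT) h₂ (h₁.shift 1 n (by lia))

lemma Le.obj₃ {n : ℤ} {T : Triangle C} (hT : T ∈ distTriang C) (h₁ : Le D (n - 1) T.obj₁)
    (h₂ : Le D n T.obj₂) : Le D n T.obj₃ :=
  Le.obj₂ (rot_of_distTriang T hT) h₂ (h₁.shift 1 n (by lia))

lemma TriangClosure.exists_ge (hD : Negative D) {M : C} (hM : TriangClosure D M) :
    ∃ n, Ge D n M := by
  induction hM with
  | of X hX => exact ⟨0, hD.ge_zero hX⟩
  | zero X hX => exact ⟨0, Ge.of_isZero hX 0⟩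
  | shift X k _ ih => obtain ⟨n, hn⟩ := ih; exact ⟨_, hn.shift k _ rfl⟩
  | ext f g h hT _ _ ih₁ ih₂ =>
    obtain ⟨n, hn⟩ := ih₁
    obtain ⟨m, hm⟩ := ih₂
    exact ⟨min n m, Ge.obj₃ hT (hn.mono (by lia)) (hm.mono (by simp))⟩
  | retract X Y r _ ih => obtain ⟨n, hn⟩ := ih; exact ⟨n, hn.retract r⟩

lemma TriangClosure.exists_le (hD : Negative D) {M : C} (hM : TriangClosure D M) :
    ∃ n, Le D n M := by
  induction hM with
  | of X hX => exact ⟨0, hD.le_zero hX⟩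
  | zero X hX => exact ⟨0, Le.of_isZero hX 0⟩
  | shift X k _ ih => obtain ⟨n, hn⟩ := ih; exact ⟨_, hn.shift k _ rfl⟩
  | ext f g h hT _ _ ih₁ ih₂ =>
    obtain ⟨n, hn⟩ := ih₁
    obtain ⟨m, hm⟩ := ih₂
    exact ⟨max (n + 1) m, Le.obj₃ hT (hn.mono (by lia)) (hm.mono (by simp))⟩
  | retract X Y r _ ih => obtain ⟨n, hn⟩ := ih; exact ⟨n, hn.retract r⟩

/-! ### Exactness of Hom for explicit triangles -/

section Exactness

variable {X Y Z E : C} {f : X ⟶ Y} {g : Y ⟶ Z} {h : Z ⟶ X⟦(1 : ℤ)⟧}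

lemma exists_shift_dist (hT : Triangle.mk f g h ∈ distTriang C) (k : ℤ) :
    ∃ (f' : X⟦k⟧ ⟶ Y⟦k⟧) (g' : Y⟦k⟧ ⟶ Z⟦k⟧) (h' : Z⟦k⟧ ⟶ X⟦k⟧⟦(1 : ℤ)⟧),
      Triangle.mk f' g' h' ∈ distTriang C :=
  ⟨_, _, _, Triangle.shift_distinguished _ hT k⟩

lemma coexact₁ (hT : Triangle.mk f g h ∈ distTriang C) (φ : E ⟶ X⟦(1 : ℤ)⟧)
    (hφ : φ ≫ f⟦(1 : ℤ)⟧' = 0) : ∃ ψ : E ⟶ Z, φ = ψ ≫ h :=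
  Triangle.coyoneda_exact₁ _ hT φ hφ

lemma coexact₂ (hT : Triangle.mk f g h ∈ distTriang C) (φ : E ⟶ Y) (hφ : φ ≫ g = 0) :
    ∃ ψ : E ⟶ X, φ = ψ ≫ f :=
  Triangle.coyoneda_exact₂ _ hT φ hφ

lemma coexact₃ (hT : Triangle.mk f g h ∈ distTriang C) (φ : E ⟶ Z) (hφ : φ ≫ h = 0) :
    ∃ ψ : E ⟶ Y, φ = ψ ≫ g :=
  Triangle.coyoneda_exact₃ _ hT φ hφ

lemma exact₂ (hT : Triangle.mk f g h ∈ distTriang C) (φ : Y ⟶ E) (hφ : f ≫ φ = 0) :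
    ∃ ψ : Z ⟶ E, φ = g ≫ ψ :=
  Triangle.yoneda_exact₂ _ hT φ hφ

lemma exact₃ (hT : Triangle.mk f g h ∈ distTriang C) (φ : Z ⟶ E) (hφ : g ≫ φ = 0) :
    ∃ ψ : X⟦(1 : ℤ)⟧ ⟶ E, φ = h ≫ ψ :=
  Triangle.yoneda_exact₃ _ hT φ hφ

lemma rot_dist (hT : Triangle.mk f g h ∈ distTriang C) :
    Triangle.mk g h (-f⟦(1 : ℤ)⟧') ∈ distTriang C :=
  rot_of_distTriang _ hT

lemma exact_shift₂ (hT : Triangle.mk f g h ∈ distTriang C) (φ : E ⟶ Y⟦(1 : ℤ)⟧)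
    (hφ : φ ≫ g⟦(1 : ℤ)⟧' = 0) : ∃ ψ : E ⟶ X⟦(1 : ℤ)⟧, φ = ψ ≫ f⟦(1 : ℤ)⟧' := by
  obtain ⟨ψ, hψ⟩ := coexact₃ (rot_dist (rot_dist hT)) φ (by simpa using hφ)
  exact ⟨-ψ, by simpa using hψ⟩

lemma exact_shift₁ (hT : Triangle.mk f g h ∈ distTriang C) (φ : E ⟶ X⟦(1 : ℤ)⟧⟦(1 : ℤ)⟧)
    (hφ : φ ≫ f⟦(1 : ℤ)⟧'⟦(1 : ℤ)⟧' = 0) : ∃ ψ : E ⟶ Z⟦(1 : ℤ)⟧, φ = ψ ≫ h⟦(1 : ℤ)⟧' :=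
  exact_shift₂ (rot_dist (rot_dist hT)) φ (by simpa using hφ)

end Exactness

/-! ### Cellular morphisms -/

/-- A finite composite `X = X₀ ⟶ X₁ ⟶ ⋯ ⟶ Xₖ = Y` in which every `Xⱼ ⟶ Xⱼ₊₁` is the cone of
a morphism `Z[i] ⟶ Xⱼ` with `Z ∈ D` and `i ≥ n`. -/
inductive Cell (D : Set C) (n : ℤ) : ∀ {X Y : C}, (X ⟶ Y) → Prop
  | id (X : C) : Cell D n (𝟙 X)
  | step {Z X Y W : C} {i : ℤ} (hZ : Z ∈ D) (hi : n ≤ i) (a : Z⟦i⟧ ⟶ X) (b : X ⟶ Y)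
      (d : Y ⟶ Z⟦i⟧⟦(1 : ℤ)⟧) (hT : Triangle.mk a b d ∈ distTriang C) (c : Y ⟶ W)
      (hc : Cell D n c) : Cell D n (b ≫ c)

/-- The dual notion: a finite composite of morphisms that are fibres of morphisms to
`Z[i]` with `Z ∈ D` and `i ≤ n`. -/
inductive CoCell (D : Set C) (n : ℤ) : ∀ {X Y : C}, (X ⟶ Y) → Prop
  | id (X : C) : CoCell D n (𝟙 X)
  | step {Z X Y W : C} {i : ℤ} (hZ : Z ∈ D) (hi : i ≤ n) (a : Y ⟶ X) (b : X ⟶ Z⟦i⟧)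
      (d : Z⟦i⟧ ⟶ Y⟦(1 : ℤ)⟧) (hT : Triangle.mk a b d ∈ distTriang C) (c : W ⟶ Y)
      (hc : CoCell D n c) : CoCell D n (c ≫ a)

lemma Cell.comp {n : ℤ} {X Y W : C} {b : X ⟶ Y} (hb : Cell D n b) {c : Y ⟶ W}
    (hc : Cell D n c) : Cell D n (b ≫ c) := by
  induction hb with
  | id X => simpa using hc
  | step hZ hi a b d hT e he ih =>
    rw [Category.assoc]
    exact Cell.step hZ hi a b d hT _ (ih hc)

lemma CoCell.comp {n : ℤ} {X Y W : C} {b : X ⟶ Y} (hb : CoCell D n b) {c : W ⟶ X}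
    (hc : CoCell D n c) : CoCell D n (c ≫ b) := by
  induction hb with
  | id X => simpa using hc
  | step hZ hi a b d hT e he ih =>
    rw [← Category.assoc]
    exact CoCell.step hZ hi a b d hT _ (ih hc)

lemma Cell.ge_cone (hD : Negative D) {n i : ℤ} {Z X Y : C} (hZ : Z ∈ D) (hi : n ≤ i)
    {a : Z⟦i⟧ ⟶ X} {b : X ⟶ Y} {d : Y ⟶ Z⟦i⟧⟦(1 : ℤ)⟧}
    (hT : Triangle.mk a b d ∈ distTriang C) (hX : Ge D n X) : Ge D n Y :=
  Ge.obj₃ hT (hD.ge hZ (by lia)) hX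

lemma CoCell.le_fibre (hD : Negative D) {n i : ℤ} {Z X Y : C} (hZ : Z ∈ D) (hi : i ≤ n)
    {a : Y ⟶ X} {b : X ⟶ Z⟦i⟧} {d : Z⟦i⟧ ⟶ Y⟦(1 : ℤ)⟧}
    (hT : Triangle.mk a b d ∈ distTriang C) (hX : Le D n X) : Le D n Y :=
  Le.obj₂ (inv_rot_of_distTriang _ hT)
    ((((hD.le hZ hi).shift (-1) _ rfl).mono (by lia) : Le D n _)) hX

lemma Cell.ge (hD : Negative D) {n : ℤ} {X Y : C} {c : X ⟶ Y} (hc : Cell D n c)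
    (hX : Ge D n X) : Ge D n Y := by
  induction hc with
  | id X => exact hX
  | step hZ hi a b d hT e he ih => exact ih (Cell.ge_cone hD hZ hi hT hX)

lemma CoCell.le (hD : Negative D) {n : ℤ} {X Y : C} {c : X ⟶ Y} (hc : CoCell D n c)
    (hY : Le D n Y) : Le D n X := by
  induction hc with
  | id X => exact hY
  | step hZ hi a b d hT e he ih => exact ih (CoCell.le_fibre hD hZ hi hT hY)

/-- A morphism from an object of `⟨D⟩` to `X` dies after finitely many cell attachments to `X`;
if `X` is right orthogonal to the `Z[i]` with `i < n`, cells of dimension at least `n` suffice. -/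
lemma TriangClosure.kill (hD : Negative D) {M : C} (hM : TriangClosure D M) :
    ∀ (k n : ℤ) {X : C}, Ge D n X → ∀ g : M⟦k⟧ ⟶ X,
      ∃ (Y : C) (c : X ⟶ Y), Cell D n c ∧ g ≫ c = 0 := by
  induction hM with
  | of Z hZ =>
    intro k n X hX g
    by_cases hk : k < n
    · exact ⟨X, 𝟙 X, Cell.id X, by rw [hX Z hZ k hk g, zero_comp]⟩
    · obtain ⟨Y, b, d, hT⟩ := distinguished_cocone_triangle g
      refine ⟨Y, b ≫ 𝟙 Y, Cell.step hZ (by lia) g b d hT _ (Cell.id Y), ?_⟩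
      rw [Category.comp_id]
      exact comp_distTriang_mor_zero₁₂ _ hT
  | zero Z hZ =>
    intro k n X hX g
    exact ⟨X, 𝟙 X, Cell.id X, ((shiftFunctor C k).map_isZero hZ).eq_of_src _ _⟩
  | shift M a _ ih =>
    intro k n X hX g
    obtain ⟨Y, c, hc, h⟩ := ih (a + k) n hX ((shiftIso M a k _ rfl).inv ≫ g)
    exact ⟨Y, c, hc, by simpa using h⟩
  | @ext M₁ M₂ M₃ u v w hT _ _ ih₁ ih₂ =>
    intro k n X hX g
    obtain ⟨u', v', w', hTk⟩ := exists_shift_dist hT k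
    obtain ⟨Y, c, hc, h⟩ := ih₂ k n hX (v' ≫ g)
    obtain ⟨g', hg'⟩ := exact₃ hTk (g ≫ c) (by simpa using h)
    obtain ⟨Y', c', hc', h'⟩ := ih₁ (k + 1) n (hc.ge hD hX)
      ((shiftIso M₁ k 1 _ rfl).inv ≫ g')
    refine ⟨Y', c ≫ c', hc.comp hc', ?_⟩
    have h'' : g' ≫ c' = 0 := by
      rw [← cancel_epi (shiftIso M₁ k 1 _ rfl).inv, ← Category.assoc, h', comp_zero]
    rw [← Category.assoc, hg', Category.assoc, h'', comp_zero]
  | retract M N r _ ih =>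
    intro k n X hX g
    obtain ⟨i, p, hip⟩ := r.shift k
    obtain ⟨Y, c, hc, h⟩ := ih k n hX (p ≫ g)
    refine ⟨Y, c, hc, ?_⟩
    rw [← Category.id_comp g, ← hip, Category.assoc, Category.assoc]
    rw [Category.assoc] at h
    rw [h, comp_zero]

/-- The dual of `TriangClosure.kill`. -/
lemma TriangClosure.cokill (hD : Negative D) {M : C} (hM : TriangClosure D M) :
    ∀ (k n : ℤ) {X : C}, Le D n X → ∀ g : X ⟶ M⟦k⟧,
      ∃ (Y : C) (c : Y ⟶ X), CoCell D n c ∧ c ≫ g = 0 := by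
  induction hM with
  | of Z hZ =>
    intro k n X hX g
    by_cases hk : n < k
    · exact ⟨X, 𝟙 X, CoCell.id X, by rw [hX Z hZ k hk g, comp_zero]⟩
    · obtain ⟨Y, b, d, hT⟩ := distinguished_cocone_triangle₁ g
      refine ⟨Y, 𝟙 Y ≫ b, CoCell.step hZ (by lia) b g d hT _ (CoCell.id Y), ?_⟩
      rw [Category.id_comp]
      exact comp_distTriang_mor_zero₁₂ _ hT
  | zero Z hZ =>
    intro k n X hX g
    exact ⟨X, 𝟙 X, CoCell.id X, ((shiftFunctor C k).map_isZero hZ).eq_of_tgt _ _⟩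
  | shift M a _ ih =>
    intro k n X hX g
    obtain ⟨Y, c, hc, h⟩ := ih (a + k) n hX (g ≫ (shiftIso M a k _ rfl).hom)
    refine ⟨Y, c, hc, ?_⟩
    rw [← cancel_mono (shiftIso M a k _ rfl).hom, Category.assoc, h, zero_comp]
  | @ext M₁ M₂ M₃ u v w hT _ _ ih₁ ih₂ =>
    intro k n X hX g
    obtain ⟨u', v', w', hTk⟩ := exists_shift_dist hT k
    obtain ⟨Y, c, hc, h⟩ := ih₁ (k + 1) n hX
      (g ≫ w' ≫ (shiftIso M₁ k 1 _ rfl).hom)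
    obtain ⟨g', hg'⟩ := coexact₃ hTk (c ≫ g) (by
      rw [← cancel_mono (shiftIso M₁ k 1 _ rfl).hom, zero_comp, ← h]
      simp only [Category.assoc])
    obtain ⟨Y', c', hc', h'⟩ := ih₂ k n (hc.le hD hX) g'
    refine ⟨Y', c' ≫ c, hc.comp hc', ?_⟩
    rw [Category.assoc, hg', ← Category.assoc, h', zero_comp]
  | retract M N r _ ih =>
    intro k n X hX g
    obtain ⟨i, p, hip⟩ := r.shift k
    obtain ⟨Y, c, hc, h⟩ := ih k n hX (g ≫ i)
    refine ⟨Y, c, hc, ?_⟩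
    rw [← Category.comp_id g, ← hip, reassoc_of% h, zero_comp]

lemma Cell.eq_zero {n : ℤ} {X Y : C} {c : X ⟶ Y} (hc : Cell D (n + 1) c) {A : C}
    (hA : Le D n A) : ∀ (g : A ⟶ X), g ≫ c = 0 → g = 0 := by
  induction hc with
  | id X => intro g hg; simpa using hg
  | @step Z X Y W i hZ hi a b d hT e he ih =>
    intro g hg
    obtain ⟨g', rfl⟩ := coexact₂ hT g (ih (g ≫ b) (by simpa using hg))
    rw [hA Z hZ i (by lia) g', zero_comp]

lemma CoCell.eq_zero {n : ℤ} {X Y : C} {c : X ⟶ Y} (hc : CoCell D n c) {B : C}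
    (hB : Ge D (n + 1) B) : ∀ (g : Y ⟶ B), c ≫ g = 0 → g = 0 := by
  induction hc with
  | id X => intro g hg; simpa using hg
  | @step Z X Y W i hZ hi a b d hT e he ih =>
    intro g hg
    obtain ⟨g', rfl⟩ := exact₂ hT g (ih (a ≫ g) (by simpa using hg))
    rw [hB Z hZ i (by lia) g', comp_zero]

/-- Orthogonality when the source lies in `⟨D⟩`; the target is arbitrary. -/
lemma TriangClosure.homZero_left (hD : Negative D) {n : ℤ} {A B : C} (hA : TriangClosure D A)
    (hAn : Le D n A) (hB : Ge D (n + 1) B) : HomZero A B := by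
  suffices h : HomZero (A⟦(0 : ℤ)⟧) B from
    h.of_iso ((shiftFunctorZero C ℤ).symm.app A) (Iso.refl B)
  intro g
  obtain ⟨Y, c, hc, h⟩ := hA.kill hD 0 (n + 1) hB g
  exact hc.eq_zero (hAn.shift 0 n (by lia)) g h

/-- Orthogonality when the target lies in `⟨D⟩`; the source is arbitrary. -/
lemma TriangClosure.homZero_right (hD : Negative D) {n : ℤ} {A B : C} (hB : TriangClosure D B)
    (hA : Le D n A) (hBn : Ge D (n + 1) B) : HomZero A B := by
  suffices h : HomZero A (B⟦(0 : ℤ)⟧) from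
    h.of_iso (Iso.refl A) ((shiftFunctorZero C ℤ).symm.app B)
  intro g
  obtain ⟨Y, c, hc, h⟩ := hB.cokill hD 0 n hA g
  exact hc.eq_zero (hBn.shift 0 (n + 1) (by lia)) g h

/-! ### The heart -/

/-- If `A` has no nonzero morphisms to `Z[i]` for `Z ∈ D` and `i > 0`, then factoring through
an object of `D` can be pulled back along attachments of cells of nonnegative dimension: the
object of `D` lifts along each attachment by negativity, and the error factors through the
attached cell. -/
lemma Cell.factors (hD : Negative D)
    (hadd : ∀ ⦃X Y : C⦄, X ∈ D → Y ∈ D → ∀ b : BinaryBicone X Y, b.IsBilimit → b.pt ∈ D)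
    {X Y : C} {c : X ⟶ Y} (hc : Cell D 0 c) {A : C} (hA : Le D 0 A) :
    ∀ (g : A ⟶ X), (∃ Z ∈ D, ∃ (s : A ⟶ Z) (t : Z ⟶ Y), g ≫ c = s ≫ t) →
      ∃ Z ∈ D, ∃ (s : A ⟶ Z) (t : Z ⟶ X), g = s ≫ t := by
  induction hc with
  | id X => intro g hg; simpa using hg
  | @step Z X Y W i hZ hi a b d hT e he ih =>
    intro g hg
    obtain ⟨Z₁, hZ₁, s, t, hst⟩ := ih (g ≫ b) (by simpa using hg)
    have htd : t ≫ d = 0 := ((hD.le_zero hZ₁) Z hZ (i + 1) (by lia)).of_iso (Iso.refl _)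
      (shiftIso Z i 1 _ rfl) _
    obtain ⟨t', ht'⟩ := coexact₃ hT t htd
    obtain ⟨g', hg'⟩ := coexact₂ hT (g - s ≫ t') (by
      rw [Preadditive.sub_comp, hst, ht', Category.assoc, sub_self])
    rcases hi.eq_or_lt with rfl | hi
    · let j := (shiftFunctorZero C ℤ).app Z
      refine ⟨Z₁ ⊞ Z, hadd hZ₁ hZ _ (BinaryBiproduct.isBilimit Z₁ Z),
        biprod.lift s (g' ≫ j.hom), biprod.desc t' (j.inv ≫ a), ?_⟩
      rw [biprod.lift_desc, Category.assoc, Iso.hom_inv_id_assoc, ← hg']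
      abel
    · refine ⟨Z₁, hZ₁, s, t', ?_⟩
      rw [hA Z hZ i hi g', zero_comp] at hg'
      exact sub_eq_zero.1 hg'

lemma mem_retractClosure (hD : Negative D) (hzero : ∃ Z : C, IsZero Z ∧ Z ∈ D)
    (hadd : ∀ ⦃X Y : C⦄, X ∈ D → Y ∈ D → ∀ b : BinaryBicone X Y, b.IsBilimit → b.pt ∈ D)
    {X : C} (hX : TriangClosure D X) (hle : Le D 0 X) (hge : Ge D 0 X) :
    X ∈ retractClosure D := by
  let j := (shiftFunctorZero C ℤ).app X
  obtain ⟨Y, c, hc, h⟩ := hX.kill hD 0 0 hge j.hom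
  obtain ⟨O, hO, hOD⟩ := hzero
  obtain ⟨Z, hZ, s, t, hst⟩ := hc.factors hD hadd hle (𝟙 X) ⟨O, hOD, 0, 0, by
    rw [← cancel_epi j.hom, Category.id_comp, h]; simp⟩
  exact ⟨Z, hZ, s, t, hst.symm⟩

/-! ### Weight decompositions -/

/-- `M` has a weight decomposition `A ⟶ M ⟶ B` at level `n`, with `A ∈ ⟨D⟩`. -/
def Dec (D : Set C) (n : ℤ) (M : C) : Prop :=
  ∃ (A B : C) (f : A ⟶ M) (g : M ⟶ B) (h : B ⟶ A⟦(1 : ℤ)⟧),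
    Triangle.mk f g h ∈ distTriang C ∧ TriangClosure D A ∧ Le D n A ∧ Ge D (n + 1) B

lemma Dec.of_ge {n : ℤ} {M : C} (hM : Ge D (n + 1) M) : Dec D n M :=
  ⟨_, _, _, _, _, contractible_distinguished₁ M, .zero _ (isZero_zero C),
    Le.of_isZero (isZero_zero C) n, hM⟩

lemma Dec.of_le {n : ℤ} {M : C} (hM : TriangClosure D M) (hM' : Le D n M) : Dec D n M :=
  ⟨_, _, _, _, _, contractible_distinguished M, hM, hM', Ge.of_isZero (isZero_zero C) _⟩

lemma Dec.of_iso {n : ℤ} {M N : C} (hM : Dec D n M) (e : M ≅ N) : Dec D n N := by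
  obtain ⟨A, B, f, g, h, hT, h₁, h₂, h₃⟩ := hM
  exact ⟨A, B, f ≫ e.hom, e.inv ≫ g, h, isomorphic_distinguished _ hT _
    (Triangle.isoMk _ _ (Iso.refl _) e.symm (Iso.refl _)
      (show (f ≫ e.hom) ≫ e.inv = 𝟙 A ≫ f by simp)
      (show (e.inv ≫ g) ≫ 𝟙 B = e.inv ≫ g by simp)
      (show h ≫ (𝟙 A)⟦(1 : ℤ)⟧' = 𝟙 B ≫ h by simp)), h₁, h₂, h₃⟩

lemma Dec.shift {n : ℤ} {M : C} (hM : Dec D n M) (k m : ℤ) (hm : n + k = m) :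
    Dec D m (M⟦k⟧) := by
  obtain ⟨A, B, f, g, h, hT, h₁, h₂, h₃⟩ := hM
  exact ⟨A⟦k⟧, B⟦k⟧, _, _, _, Triangle.shift_distinguished _ hT k, h₁.shift _ k,
    h₂.shift k m hm, h₃.shift k _ (by lia)⟩

/-- A morphism of distinguished triangles `(A₁, A₂, A₃) ⟶ (X, Y, Z)` whose first two components
have cones `B₁`, `B₂`: any `E` orthogonal to `B₁[1]` and `B₂` is orthogonal to the cone `B₃` of the
third component. Only exactness of `Hom(E, -)` is used, so that no octahedral axiom (or
`3 × 3`-diagram) is needed. -/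
lemma homZero_cone {A₁ A₂ A₃ X Y Z B₁ B₂ B₃ E : C}
    {a : A₁ ⟶ A₂} {b : A₂ ⟶ A₃} {c : A₃ ⟶ A₁⟦(1 : ℤ)⟧}
    (hA : Triangle.mk a b c ∈ distTriang C)
    {u : X ⟶ Y} {v : Y ⟶ Z} {w : Z ⟶ X⟦(1 : ℤ)⟧} (hX : Triangle.mk u v w ∈ distTriang C)
    {f₁ : A₁ ⟶ X} {g₁ : X ⟶ B₁} {h₁ : B₁ ⟶ A₁⟦(1 : ℤ)⟧}
    (hT₁ : Triangle.mk f₁ g₁ h₁ ∈ distTriang C)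
    {f₂ : A₂ ⟶ Y} {g₂ : Y ⟶ B₂} {h₂ : B₂ ⟶ A₂⟦(1 : ℤ)⟧}
    (hT₂ : Triangle.mk f₂ g₂ h₂ ∈ distTriang C)
    {f₃ : A₃ ⟶ Z} {g₃ : Z ⟶ B₃} {h₃ : B₃ ⟶ A₃⟦(1 : ℤ)⟧}
    (hT₃ : Triangle.mk f₃ g₃ h₃ ∈ distTriang C)
    (comm₁ : a ≫ f₂ = f₁ ≫ u) (comm₂ : b ≫ f₃ = f₂ ≫ v) (comm₃ : c ≫ f₁⟦(1 : ℤ)⟧' = f₃ ≫ w)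
    (hE₁ : HomZero E (B₁⟦(1 : ℤ)⟧)) (hE₂ : HomZero E B₂) : HomZero E B₃ := by
  have ab : a ≫ b = 0 := comp_distTriang_mor_zero₁₂ _ hA
  have wu : w ≫ u⟦(1 : ℤ)⟧' = 0 := comp_distTriang_mor_zero₃₁ _ hX
  have fg₃ : f₃ ≫ g₃ = 0 := comp_distTriang_mor_zero₁₂ _ hT₃
  have hf₃ : h₃ ≫ f₃⟦(1 : ℤ)⟧' = 0 := comp_distTriang_mor_zero₃₁ _ hT₃
  have comm₁' : a⟦(1 : ℤ)⟧' ≫ f₂⟦(1 : ℤ)⟧' = f₁⟦(1 : ℤ)⟧' ≫ u⟦(1 : ℤ)⟧' := by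
    rw [← Functor.map_comp, comm₁, Functor.map_comp]
  have comm₂' : b⟦(1 : ℤ)⟧' ≫ f₃⟦(1 : ℤ)⟧' = f₂⟦(1 : ℤ)⟧' ≫ v⟦(1 : ℤ)⟧' := by
    rw [← Functor.map_comp, comm₂, Functor.map_comp]
  have comm₃' : c⟦(1 : ℤ)⟧' ≫ f₁⟦(1 : ℤ)⟧'⟦(1 : ℤ)⟧' = f₃⟦(1 : ℤ)⟧' ≫ w⟦(1 : ℤ)⟧' := by
    rw [← Functor.map_comp, comm₃, Functor.map_comp]
  have lift₁ : ∀ ξ : E ⟶ X⟦(1 : ℤ)⟧, ∃ ζ : E ⟶ A₁⟦(1 : ℤ)⟧, ξ = ζ ≫ f₁⟦(1 : ℤ)⟧' :=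
    fun ξ => exact_shift₂ hT₁ ξ (hE₁ _)
  have inj₂ : ∀ χ : E ⟶ A₂⟦(1 : ℤ)⟧, χ ≫ f₂⟦(1 : ℤ)⟧' = 0 → χ = 0 := by
    intro χ hχ
    obtain ⟨ψ, rfl⟩ := coexact₁ hT₂ χ hχ
    rw [hE₂ ψ, zero_comp]
  -- Injectivity of `Hom(E, A₃[1]) ⟶ Hom(E, Z[1])`.
  have inj₃ : ∀ ψ : E ⟶ A₃⟦(1 : ℤ)⟧, ψ ≫ f₃⟦(1 : ℤ)⟧' = 0 → ψ = 0 := by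
    intro ψ hψ
    have hψc : ψ ≫ c⟦(1 : ℤ)⟧' = 0 := by
      obtain ⟨η, hη⟩ := exact_shift₁ hT₁ (ψ ≫ c⟦(1 : ℤ)⟧') (by
        rw [Category.assoc, comm₃', reassoc_of% hψ, zero_comp])
      rw [hη, hE₁ η, zero_comp]
    obtain ⟨χ, rfl⟩ := exact_shift₂ (rot_dist hA) ψ hψc
    obtain ⟨ξ, hξ⟩ := exact_shift₂ hX (χ ≫ f₂⟦(1 : ℤ)⟧') (by
      rw [Category.assoc, ← comm₂', ← Category.assoc, hψ])
    obtain ⟨ζ, rfl⟩ := lift₁ ξ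
    have hχ := inj₂ (χ - ζ ≫ a⟦(1 : ℤ)⟧') (by
      rw [Preadditive.sub_comp, hξ, Category.assoc, Category.assoc, comm₁', sub_self])
    rw [sub_eq_zero.1 hχ, Category.assoc, ← Functor.map_comp, ab, Functor.map_zero, comp_zero]
  intro φ
  obtain ⟨θ, rfl⟩ := coexact₃ hT₃ φ
    (inj₃ _ (by rw [Category.assoc, hf₃, comp_zero]))
  -- Surjectivity of `Hom(E, A₃) ⟶ Hom(E, Z)`.
  obtain ⟨ζ, hζ⟩ := lift₁ (θ ≫ w)
  have hζa := inj₂ (ζ ≫ a⟦(1 : ℤ)⟧') (by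
    rw [Category.assoc, comm₁', ← Category.assoc, ← hζ, Category.assoc, wu, comp_zero])
  obtain ⟨η, rfl⟩ := coexact₁ hA ζ hζa
  obtain ⟨κ, hκ⟩ := coexact₃ hX (θ - η ≫ f₃) (by
    rw [Preadditive.sub_comp, hζ, Category.assoc, Category.assoc, comm₃, sub_self])
  obtain ⟨μ, rfl⟩ := coexact₂ hT₂ κ (hE₂ _)
  rw [sub_eq_iff_eq_add.1 hκ, Preadditive.add_comp, Category.assoc μ, ← comm₂]
  simp [fg₃]

lemma Dec.cone (hD : Negative D) {n : ℤ} {X Y Z : C} {u : X ⟶ Y} {v : Y ⟶ Z}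
    {w : Z ⟶ X⟦(1 : ℤ)⟧} (hT : Triangle.mk u v w ∈ distTriang C)
    (hX : Dec D (n - 1) X) (hY : Dec D n Y) : Dec D n Z := by
  obtain ⟨A₁, B₁, f₁, g₁, h₁, hT₁, hA₁, hA₁', hB₁⟩ := hX
  obtain ⟨A₂, B₂, f₂, g₂, h₂, hT₂, hA₂, hA₂', hB₂⟩ := hY
  obtain ⟨a, ha⟩ := coexact₂ hT₂ (f₁ ≫ u)
    (hA₁.homZero_left hD (hA₁'.mono (by lia)) hB₂ _)
  obtain ⟨A₃, b, c, hA⟩ := distinguished_cocone_triangle a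
  obtain ⟨f₃, comm₂, comm₃⟩ := complete_distinguished_triangle_morphism _ _ hA hT f₁ f₂ ha.symm
  obtain ⟨B₃, g₃, h₃, hT₃⟩ := distinguished_cocone_triangle f₃
  refine ⟨A₃, B₃, f₃, g₃, h₃, hT₃, .ext a b c hA hA₁ hA₂, Le.obj₃ hA hA₁' hA₂', ?_⟩
  intro E hE i hi
  exact homZero_cone hA hT hT₁ hT₂ hT₃ ha.symm comm₂ comm₃
    (hB₁.shift 1 (n + 1) (by lia) E hE i hi) (hB₂ E hE i hi)

/-- A retract `M` of `N` has a complement `M'`, and either of `M`, `M'` is the cone of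
the inclusion of the other into `N`. A decomposition of one at level `n - 1` thus gives a
decomposition of the other at level `n`; at very negative levels both are trivial. -/
lemma Dec.retract (hD : Negative D) {M N : C} (r : IsRetract M N) (hN : TriangClosure D N)
    (hdec : ∀ n, Dec D n N) (n : ℤ) : Dec D n M := by
  obtain ⟨i, p, hip⟩ := r
  have hM : TriangClosure D M := .retract M N ⟨i, p, hip⟩ hN
  obtain ⟨M', q, d, hT⟩ := distinguished_cocone_triangle i
  have hM' : TriangClosure D M' := .ext i q d hT hM hN
  have hi : Mono i := by
    have : Mono (i ≫ p) := by rw [hip]; infer_instance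
    exact mono_of_mono i p
  obtain ⟨e, -, -⟩ := exists_iso_binaryBiproduct_of_distTriang _ hT
    (Triangle.mor₃_eq_zero_of_mono₁ _ hT hi)
  have hT' := binaryBiproductTriangle_distinguished M' M
  have hdec' : ∀ n, Dec D n (M' ⊞ M) := fun n =>
    (hdec n).of_iso (e ≪≫ biprod.braiding M M')
  obtain ⟨a, ha⟩ := hM.exists_ge hD
  obtain ⟨a', ha'⟩ := hM'.exists_ge hD
  let m := min a a' - 1
  have key : ∀ n, m ≤ n → Dec D n M ∧ Dec D n M' := by
    intro n hn
    induction n, hn using Int.leInduction with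
    | base => exact ⟨.of_ge (ha.mono (by simp [m])), .of_ge (ha'.mono (by simp [m]))⟩
    | succ n hn ih =>
      exact ⟨Dec.cone hD hT' (by simpa using ih.2) (hdec' _),
        Dec.cone hD hT (by simpa using ih.1) (hdec _)⟩
  rcases le_total m n with h | h
  · exact (key n h).1
  · exact .of_ge (ha.mono (by simp [m] at h ⊢; lia))

lemma TriangClosure.dec (hD : Negative D) {M : C} (hM : TriangClosure D M) :
    ∀ n, Dec D n M := by
  induction hM with
  | of X hX =>
    intro n
    rcases lt_or_ge n 0 with h | h
    · exact .of_ge ((hD.ge_zero hX).mono (by lia))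
    · exact .of_le (.of X hX) ((hD.le_zero hX).mono h)
  | zero X hX => exact fun n => .of_ge (Ge.of_isZero hX _)
  | shift X k _ ih => exact fun n => (ih (n - k)).shift k n (by lia)
  | ext f g h hT _ _ ih₁ ih₂ => exact fun n => Dec.cone hD hT (ih₁ _) (ih₂ n)
  | retract X Y r hY ih => exact Dec.retract hD r hY ih

/-! ### Existence and uniqueness -/

lemma isWeightStructureOn (hD : Negative D) :
    IsWeightStructureOn {X : C | TriangClosure D X} {X : C | TriangClosure D X ∧ Le D 0 X}
      {X : C | TriangClosure D X ∧ Ge D 0 X} where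
  le_sub := fun _ h => h.1
  ge_sub := fun _ h => h.1
  retract_le := fun _ _ hX r hY => ⟨hX, hY.2.retract r⟩
  retract_ge := fun _ _ hX r hY => ⟨hX, hY.2.retract r⟩
  shift_le := fun _ hX => ⟨hX.1.shift _ _, (hX.2.shift (-1) _ rfl).mono (by lia)⟩
  shift_ge := fun _ hX => ⟨hX.1.shift _ _, (hX.2.shift 1 _ rfl).mono (by lia)⟩
  orthogonal := fun _ _ hX hY => hX.1.homZero_left hD hX.2 (hY.2.shift 1 _ rfl)
  decomp := by
    intro M hM
    obtain ⟨A, B, f, g, h, hT, hA, hA', hB⟩ := hM.dec hD 0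
    exact ⟨A, B, f, g, h, hT, ⟨hA, hA'⟩, .shift _ _ (.ext f g h hT hA hM),
      hB.shift (-1) 0 (by lia)⟩

/-- A weight structure on a subcategory `Q ⊇ ⟨D⟩` whose heart contains `D` restricts on `⟨D⟩` to the
classes of objects orthogonal to the positive, respectively negative, shifts of `D`. -/
lemma IsWeightStructureOn.inter_eq (hD : Negative D) {Q LEs GEs : Set C}
    (W : IsWeightStructureOn Q LEs GEs) (hQ : {X : C | TriangClosure D X} ⊆ Q)
    (hDW : D ⊆ LEs ∩ GEs) :
    {X : C | TriangClosure D X} ∩ LEs = {X : C | TriangClosure D X ∧ Le D 0 X} ∧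
    {X : C | TriangClosure D X} ∩ GEs = {X : C | TriangClosure D X ∧ Ge D 0 X} := by
  have hshiftGE : ∀ Y ∈ D, ∀ n : ℕ, Y⟦(n : ℤ)⟧ ∈ GEs := by
    intro Y hY n
    induction n with
    | zero =>
      exact W.retract_ge (hQ (.shift _ _ (.of Y hY)))
        (IsRetract.of_iso ((shiftFunctorZero C ℤ).app Y)) (hDW hY).2
    | succ n ih =>
      exact W.retract_ge (hQ (.shift _ _ (.of Y hY)))
        (IsRetract.of_iso (shiftIso Y n 1 _ (by push_cast; rfl)).symm) (W.shift_ge ih)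
  have hshiftLE : ∀ Y ∈ D, ∀ n : ℕ, Y⟦(-n : ℤ)⟧ ∈ LEs := by
    intro Y hY n
    induction n with
    | zero =>
      exact W.retract_le (hQ (.shift _ _ (.of Y hY)))
        (IsRetract.of_iso ((shiftFunctorZero' C (-((0 : ℕ) : ℤ)) (by simp)).app Y)) (hDW hY).1
    | succ n ih =>
      exact W.retract_le (hQ (.shift _ _ (.of Y hY)))
        (IsRetract.of_iso (shiftIso Y (-n) (-1) _ (by push_cast; ring)).symm) (W.shift_le ih)
  have hLe : ∀ X ∈ LEs, Le D 0 X := by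
    intro X hX Y hY i hi
    obtain ⟨n, hn⟩ := Int.eq_ofNat_of_zero_le (show 0 ≤ i - 1 by lia)
    have h : HomZero X (Y⟦(n : ℤ)⟧⟦(1 : ℤ)⟧) := W.orthogonal hX (hshiftGE Y hY n)
    exact h.of_iso (Iso.refl X) (shiftIso Y n 1 i (by lia)).symm
  have hGe : ∀ Y ∈ GEs, Ge D 0 Y := by
    intro Y hY X hX i hi
    obtain ⟨n, hn⟩ := Int.eq_ofNat_of_zero_le (show 0 ≤ -(i + 1) by lia)
    have h : HomZero (X⟦(-n : ℤ)⟧) (Y⟦(1 : ℤ)⟧) := W.orthogonal (hshiftLE X hX n) hY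
    exact (h.of_iso (shiftIso X i 1 (-n) (by lia)) (Iso.refl _)).of_shift 1
  have hGe' : ∀ B : C, B⟦(-1 : ℤ)⟧ ∈ GEs → Ge D (0 + 1) B := fun B hB =>
    ((hGe _ hB).shift 1 _ rfl).retract (IsRetract.of_iso (shiftIsoId B (-1) 1 (by lia)).symm)
  constructor
  · refine Set.Subset.antisymm (fun X hX => ⟨hX.1, hLe X hX.2⟩) (fun X hX => ⟨hX.1, ?_⟩)
    obtain ⟨A, B, f, g, h, hT, hA, hB⟩ := W.decomp X (hQ hX.1)
    obtain ⟨s, hs⟩ := coexact₂ hT (𝟙 X)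
      (hX.1.homZero_left hD hX.2 (hGe' B hB) _)
    exact W.retract_le (hQ hX.1) ⟨s, f, hs.symm⟩ hA
  · refine Set.Subset.antisymm (fun X hX => ⟨hX.1, hGe X hX.2⟩) (fun X hX => ⟨hX.1, ?_⟩)
    have hX1 : TriangClosure D (X⟦(1 : ℤ)⟧) := .shift _ _ hX.1
    obtain ⟨A, B, f, g, h, hT, hA, hB⟩ := W.decomp (X⟦(1 : ℤ)⟧) (hQ hX1)
    obtain ⟨s, hs⟩ := exact₂ hT (𝟙 _)
      (hX1.homZero_right hD (hLe A hA) (hX.2.shift 1 _ rfl) _)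
    have r : IsRetract (X⟦(1 : ℤ)⟧) B := ⟨g, s, hs.symm⟩
    exact W.retract_ge (hQ hX.1)
      ((IsRetract.of_iso (shiftIsoId X 1 (-1) (by lia)).symm).trans (r.shift (-1))) hB

lemma WeightStructure.isWeightStructureOn_univ (w : WeightStructure C) :
    IsWeightStructureOn Set.univ w.LE w.GE where
  le_sub := Set.subset_univ _
  ge_sub := Set.subset_univ _
  retract_le := fun _ _ _ r h => w.retract_LE r h
  retract_ge := fun _ _ _ r h => w.retract_GE r h
  shift_le := w.shift_LE
  shift_ge := w.shift_GE
  orthogonal := w.orthogonal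
  decomp := fun M _ => w.decomp M

/-- a negative additive full subcategory `D` of `C` generates a unique
bounded weight structure on the smallest Karoubi-closed triangulated subcategory
`T = ⟨D⟩` with `D` contained in the heart; the heart is the Karoubi-closure of `D`
in `C`, and if `D ⊆ C_{w=0}` for a weight structure `w` on `C` then the embedding
`T → C` is strictly weight-exact. -/
theorem statement6 (D : Set C)
    (hzero : ∃ Z : C, IsZero Z ∧ Z ∈ D)
    (hadd : ∀ ⦃X Y : C⦄, X ∈ D → Y ∈ D →
      ∀ b : BinaryBicone X Y, b.IsBilimit → b.pt ∈ D)
    (hneg : ∀ ⦃X Y : C⦄, X ∈ D → Y ∈ D → ∀ i : ℤ, 0 < i → ∀ f : X ⟶ Y⟦i⟧, f = 0) :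
    (∃! LG : Set C × Set C,
      IsWeightStructureOn {X : C | TriangClosure D X} LG.1 LG.2 ∧ D ⊆ LG.1 ∩ LG.2) ∧
    (∀ LEs GEs : Set C,
      IsWeightStructureOn {X : C | TriangClosure D X} LEs GEs → D ⊆ LEs ∩ GEs →
      ((∀ X : C, TriangClosure D X → (∃ n : ℤ, X⟦n⟧ ∈ LEs) ∧ (∃ n : ℤ, X⟦n⟧ ∈ GEs)) ∧
       LEs ∩ GEs = retractClosure D ∧
       (∀ w : WeightStructure C, D ⊆ w.LE ∩ w.GE →
         LEs = {X : C | TriangClosure D X} ∩ w.LE ∧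
         GEs = {X : C | TriangClosure D X} ∩ w.GE))) := by
  have hD : Negative D := hneg
  have huniq : ∀ LEs GEs : Set C, IsWeightStructureOn {X : C | TriangClosure D X} LEs GEs →
      D ⊆ LEs ∩ GEs → LEs = {X : C | TriangClosure D X ∧ Le D 0 X} ∧
        GEs = {X : C | TriangClosure D X ∧ Ge D 0 X} := by
    intro LEs GEs W hDW
    have h := W.inter_eq hD subset_rfl hDW
    rwa [Set.inter_eq_right.2 W.le_sub, Set.inter_eq_right.2 W.ge_sub] at h
  refine ⟨⟨(_, _), ⟨isWeightStructureOn hD, fun X hX =>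
    ⟨⟨.of X hX, hD.le_zero hX⟩, ⟨.of X hX, hD.ge_zero hX⟩⟩⟩, ?_⟩, ?_⟩
  · rintro ⟨LEs, GEs⟩ ⟨W, hDW⟩
    exact Prod.ext (huniq _ _ W hDW).1 (huniq _ _ W hDW).2
  · intro LEs GEs W hDW
    obtain ⟨rfl, rfl⟩ := huniq LEs GEs W hDW
    refine ⟨fun X hX => ⟨?_, ?_⟩, ?_, ?_⟩
    · obtain ⟨n, hn⟩ := hX.exists_le hD
      exact ⟨-n, hX.shift _ _, hn.shift (-n) 0 (by lia)⟩
    · obtain ⟨n, hn⟩ := hX.exists_ge hD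
      exact ⟨-n, hX.shift _ _, hn.shift (-n) 0 (by lia)⟩
    · refine Set.Subset.antisymm
        (fun X hX => mem_retractClosure hD hzero hadd hX.1.1 hX.1.2 hX.2.2) ?_
      rintro X ⟨Y, hY, r⟩
      have hX : TriangClosure D X := .retract X Y r (.of Y hY)
      exact ⟨⟨hX, (hD.le_zero hY).retract r⟩, ⟨hX, (hD.ge_zero hY).retract r⟩⟩
    · intro w hw
      have h := w.isWeightStructureOn_univ.inter_eq hD (Set.subset_univ _) hw
      exact ⟨h.1.symm, h.2.symm⟩

end CWH
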